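/- arXiv:2303.10631 — 2 statements merged into one kernel-verified Lean document; each statement's English description precedes it below -/
import Mathlib

section
/- Let p be a prime and k ∈ ℕ. Then every bideterministic weighted automaton A over the ring ℤ/p^kℤ admits an equivalent minimal automaton that is bideterministic: there exists a bideterministic weighted automaton B over ℤ/p^kℤ with ‖B‖ = ‖A‖ such that B is minimal. -/
/-- A weighted automaton over a semiring `S` and alphabet `α`:
a finite type of states `Q`, a transition weighting `σ`, an initial
weighting `ι` and a terminal weighting `τ`. -/
structure WeightedAutomaton (S : Type) [Semiring S] (α : Type) : Type 1 where
  Q : Type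
  [fintypeQ : Fintype Q]
  σ : Q → α → Q → S
  ι : Q → S
  τ : Q → S

namespace WeightedAutomaton

attribute [instance] fintypeQ

variable {S : Type} [Semiring S] {α : Type}

/-- The "future" of a state on a word: the sum, over all runs from this state
upon the word, of the product of the transition weights times the terminal
weight of the last state.  (Sequences of states using a zero-weight transition
contribute zero, so this is exactly the sum over runs.) -/
def future (A : WeightedAutomaton S α) : List α → A.Q → S
  | [], q => A.τ q
  | c :: w, q => ∑ p : A.Q, A.σ q c p * A.future w p

/-- The behaviour of a weighted automaton: the series sending each word `w`
to the sum of the monomial weights `ι(q₀)·σ(q₀,c₁,q₁)⋯σ(q_{n−1},cₙ,qₙ)·τ(qₙ)`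
of all runs of the automaton upon `w`. -/
def behaviour (A : WeightedAutomaton S α) (w : List α) : S :=
  ∑ q : A.Q, A.ι q * A.future w q

/-- A weighted automaton is bideterministic if at most one state has nonzero
initial weight, at most one state has nonzero terminal weight, and for every
letter each state has at most one outgoing and at most one incoming transition
with nonzero weight upon that letter. -/
def Bideterministic (A : WeightedAutomaton S α) : Prop :=
  (∀ p q, A.ι p ≠ 0 → A.ι q ≠ 0 → p = q) ∧
  (∀ p q, A.τ p ≠ 0 → A.τ q ≠ 0 → p = q) ∧
  (∀ p c q q', A.σ p c q ≠ 0 → A.σ p c q' ≠ 0 → q = q') ∧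
  (∀ p p' c q, A.σ p c q ≠ 0 → A.σ p' c q ≠ 0 → p = p')

/-- `A.IsPath q l` : starting in state `q`, the list `l` of (letter, next state)
pairs follows transitions all of which have nonzero weight, i.e. it is a run. -/
def IsPath (A : WeightedAutomaton S α) : A.Q → List (α × A.Q) → Prop
  | _, [] => True
  | q, (c, q') :: l => A.σ q c q' ≠ 0 ∧ A.IsPath q' l

/-- The last state of a path. -/
def pathEnd (A : WeightedAutomaton S α) : A.Q → List (α × A.Q) → A.Q
  | q, [] => q
  | _, (_, q') :: l => A.pathEnd q' l

/-- The product of the transition weights along a path. -/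
def pathWeight (A : WeightedAutomaton S α) : A.Q → List (α × A.Q) → S
  | _, [] => 1
  | q, (c, q') :: l => A.σ q c q' * A.pathWeight q' l

/-- A state is accessible if some run from a state with nonzero initial weight
ends in it. -/
def Accessible (A : WeightedAutomaton S α) (q : A.Q) : Prop :=
  ∃ p l, A.ι p ≠ 0 ∧ A.IsPath p l ∧ A.pathEnd p l = q

/-- A state is coaccessible if some run from it ends in a state with nonzero
terminal weight. -/
def Coaccessible (A : WeightedAutomaton S α) (q : A.Q) : Prop :=
  ∃ l, A.IsPath q l ∧ A.τ (A.pathEnd q l) ≠ 0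

/-- A weighted automaton is trim if all its states are accessible and
coaccessible. -/
def Trim (A : WeightedAutomaton S α) : Prop :=
  ∀ q, A.Accessible q ∧ A.Coaccessible q

/-- A weighted automaton is semantically trim if every state lies on some run
whose monomial weight is nonzero. -/
def SemanticallyTrim (A : WeightedAutomaton S α) : Prop :=
  ∀ q, ∃ p l, A.IsPath p l ∧ (q = p ∨ q ∈ l.map Prod.snd) ∧
    A.ι p * A.pathWeight p l * A.τ (A.pathEnd p l) ≠ 0

/-- The number of states of a weighted automaton. -/
def states (A : WeightedAutomaton S α) : ℕ := Fintype.card A.Q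

/-- A weighted automaton is minimal if every weighted automaton over the same
semiring and alphabet with the same behaviour has at least as many states. -/
def Minimal (A : WeightedAutomaton S α) : Prop :=
  ∀ B : WeightedAutomaton S α, B.behaviour = A.behaviour → A.states ≤ B.states

end WeightedAutomaton

/-!
In a bideterministic automaton each word labels at most one run from a given state, and at most one
run into a given state. Hence deleting the states that lie on no run of nonzero monomial weight
does not change the behaviour. For each remaining state `q` choose words `u q` and `v q` such that
the run upon `u q ++ v q` has nonzero weight and visits `q` after `u q`. The value of the behaviour
at `u p ++ v q` is nonzero for `p = q` and zero otherwise, so the Hankel matrix of the behaviour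
contains a diagonal submatrix with nonzero diagonal entries, indexed by the remaining states. An
automaton with `m` states factors its Hankel matrix through `m` coordinates, and over a ring whose
principal right ideals form a chain, such as `ℤ/p^kℤ`, a diagonal matrix with nonzero diagonal
entries does not factor through fewer coordinates than its size.
-/

section ChainRing

variable {ι : Type*}

theorem exists_mem_forall_dvd_of_preValuationRing {R : Type*} [Monoid R] [PreValuationRing R]
    {s : Finset ι} (hs : s.Nonempty) (f : ι → R) : ∃ i ∈ s, ∀ j ∈ s, f i ∣ f j := by
  induction hs using Finset.Nonempty.cons_induction with
  | singleton i => exact ⟨i, by simp⟩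
  | cons i s _ _ ih =>
    obtain ⟨j, hj, hdvd⟩ := ih
    rcases ValuationRing.dvd_total (f i) (f j) with hij | hji
    · exact ⟨i, by simp, by simpa using fun l hl => hij.trans (hdvd l hl)⟩
    · exact ⟨j, by simp [hj], by simpa using ⟨hji, hdvd⟩⟩

/- Gaussian elimination: the entry `Y r j` dividing all others in row `r` clears that row. This
perturbs the product only by multiples of its column `j`, which vanishes outside row `j`, so
dropping `j` and `r` leaves a diagonal product. -/
theorem card_le_card_of_sum_mul_pairwise_eq_zero {R κ : Type*} [Ring R] [PreValuationRing R]
    (s : Finset κ) (t : Finset ι) (X : ι → κ → R) (Y : κ → ι → R)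
    (diag : ∀ i ∈ t, ∑ r ∈ s, X i r * Y r i ≠ 0)
    (offDiag : (t : Set ι).Pairwise fun i j => ∑ r ∈ s, X i r * Y r j = 0) :
    t.card ≤ s.card := by
  classical
  induction s using Finset.induction_on generalizing t Y with
  | empty =>
    have t_empty : t = ∅ := Finset.eq_empty_of_forall_notMem fun i hi => diag i hi (by simp)
    simp [t_empty]
  | insert r s hr ih =>
    rcases t.eq_empty_or_nonempty with rfl | ht
    · simp
    obtain ⟨j, hj, hdvd⟩ := exists_mem_forall_dvd_of_preValuationRing ht (Y r)
    choose! c hc using hdvd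
    let Z : κ → ι → R := fun q l => Y q l - Y q j * c l
    have sum_eq : ∀ i ∈ t.erase j, ∀ l ∈ t.erase j,
        ∑ q ∈ s, X i q * Z q l = ∑ q ∈ insert r s, X i q * Y q l := fun i hi l hl => by
      have Z_pivot_row : Z r l = 0 := sub_eq_zero.mpr (hc l (Finset.mem_of_mem_erase hl))
      calc ∑ q ∈ s, X i q * Z q l
        _ = ∑ q ∈ insert r s, X i q * Z q l := by simp [Finset.sum_insert hr, Z_pivot_row]
        _ = ∑ q ∈ insert r s, X i q * Y q l - (∑ q ∈ insert r s, X i q * Y q j) * c l := by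
          simp only [Z, mul_sub, Finset.sum_sub_distrib, Finset.sum_mul, mul_assoc]
        _ = ∑ q ∈ insert r s, X i q * Y q l := by
          rw [offDiag (Finset.mem_of_mem_erase hi) hj (Finset.ne_of_mem_erase hi), zero_mul,
            sub_zero]
    have card_erase_le : (t.erase j).card ≤ s.card := by
      refine ih (t.erase j) Z (fun i hi => ?_) fun i hi l hl hil => (sum_eq i hi l hl).trans ?_
      · rw [sum_eq i hi i hi]
        exact diag i (Finset.mem_of_mem_erase hi)
      · exact offDiag (Finset.mem_of_mem_erase hi) (Finset.mem_of_mem_erase hl) hil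
    rw [Finset.card_insert_of_notMem hr, ← Finset.card_erase_add_one hj]
    exact Nat.succ_le_succ card_erase_le

theorem preValuationRing_zmod_prime_pow (p k : ℕ) [Fact p.Prime] :
    PreValuationRing (ZMod (p ^ k)) :=
  Function.Surjective.preValuationRing
    ((PadicInt.toZModPow k : ℤ_[p] →+* ZMod (p ^ k)) : ℤ_[p] →ₙ* ZMod (p ^ k))
    (ZMod.ringHom_surjective (PadicInt.toZModPow k))

end ChainRing

namespace WeightedAutomaton

section Semiring

variable {S : Type} [Semiring S] {α : Type} (A : WeightedAutomaton S α)

/-- The total weight of the runs upon a word that end in a given state, including the initial weight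
but not the terminal one. It is dual to `future`. -/
def past (u : List α) : A.Q → S :=
  u.foldl (fun x c q => ∑ p, x p * A.σ p c q) A.ι

theorem past_append_singleton (u : List α) (c : α) (q : A.Q) :
    A.past (u ++ [c]) q = ∑ p, A.past u p * A.σ p c q := by
  simp [past]

theorem behaviour_append (u v : List α) :
    A.behaviour (u ++ v) = ∑ q, A.past u q * A.future v q := by
  induction u using List.reverseRecOn generalizing v with
  | nil => rfl
  | append_singleton u c ih =>
    rw [List.append_assoc, List.singleton_append, ih]
    simp only [future, past_append_singleton, Finset.mul_sum, Finset.sum_mul, mul_assoc]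
    exact Finset.sum_comm

/-- The states `q` such that, for some words `u` and `v`, the runs upon `u ++ v` that are in `q`
after reading `u` have nonzero total weight. -/
def usefulStates : Set A.Q :=
  {q | ∃ u v, A.past u q * A.future v q ≠ 0}

open Classical in
/-- The subautomaton on a set of states, obtained by deleting all states outside it. -/
noncomputable def restrict (s : Set A.Q) : WeightedAutomaton S α where
  Q := s
  σ p c q := A.σ p c q
  ι q := A.ι q
  τ q := A.τ q

variable {A}

theorem past_mul_future_eq_zero {q : A.Q} (hq : q ∉ A.usefulStates) (u v : List α) :
    A.past u q * A.future v q = 0 :=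
  not_not.mp fun h => hq ⟨u, v, h⟩

theorem sum_restrict_eq_sum {s : Set A.Q} {f : A.Q → S} (hf : ∀ q ∉ s, f q = 0) :
    ∑ q : (A.restrict s).Q, f q.1 = ∑ q, f q :=
  Fintype.sum_of_injective (fun q : (A.restrict s).Q => q.1) Subtype.val_injective _ f
    (fun q hq => hf q fun hqs => hq ⟨⟨q, hqs⟩, rfl⟩) fun _ => rfl

namespace Bideterministic

protected theorem restrict (hA : A.Bideterministic) (s : Set A.Q) :
    (A.restrict s).Bideterministic := by
  obtain ⟨initial_unique, terminal_unique, target_unique, source_unique⟩ := hA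
  exact ⟨fun _ _ hp hq => Subtype.ext (initial_unique _ _ hp hq),
    fun _ _ hp hq => Subtype.ext (terminal_unique _ _ hp hq),
    fun _ _ _ _ hq hq' => Subtype.ext (target_unique _ _ _ _ hq hq'),
    fun _ _ _ _ hp hp' => Subtype.ext (source_unique _ _ _ _ hp hp')⟩

theorem eq_of_past_ne_zero (hA : A.Bideterministic) {u : List α} {p q : A.Q}
    (hp : A.past u p ≠ 0) (hq : A.past u q ≠ 0) : p = q := by
  obtain ⟨initial_unique, -, target_unique, -⟩ := hA
  induction u using List.reverseRecOn generalizing p q with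
  | nil => exact initial_unique p q hp hq
  | append_singleton u c ih =>
    rw [past_append_singleton] at hp hq
    obtain ⟨p', -, hp'⟩ := Finset.exists_ne_zero_of_sum_ne_zero hp
    obtain ⟨q', -, hq'⟩ := Finset.exists_ne_zero_of_sum_ne_zero hq
    obtain rfl := ih (left_ne_zero_of_mul hp') (left_ne_zero_of_mul hq')
    exact target_unique p' c p q (right_ne_zero_of_mul hp') (right_ne_zero_of_mul hq')

theorem eq_of_future_ne_zero (hA : A.Bideterministic) {v : List α} {p q : A.Q}
    (hp : A.future v p ≠ 0) (hq : A.future v q ≠ 0) : p = q := by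
  obtain ⟨-, terminal_unique, -, source_unique⟩ := hA
  induction v generalizing p q with
  | nil => exact terminal_unique p q hp hq
  | cons c v ih =>
    obtain ⟨p', -, hp'⟩ := Finset.exists_ne_zero_of_sum_ne_zero hp
    obtain ⟨q', -, hq'⟩ := Finset.exists_ne_zero_of_sum_ne_zero hq
    obtain rfl := ih (right_ne_zero_of_mul hp') (right_ne_zero_of_mul hq')
    exact source_unique p q c p' (left_ne_zero_of_mul hp') (left_ne_zero_of_mul hq')

theorem past_append_singleton_of_ne_zero (hA : A.Bideterministic) (u : List α) {c : α} {p q : A.Q}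
    (hpq : A.σ p c q ≠ 0) : A.past (u ++ [c]) q = A.past u p * A.σ p c q := by
  obtain ⟨-, -, -, source_unique⟩ := hA
  rw [past_append_singleton]
  refine Fintype.sum_eq_single p fun p' hp' => ?_
  rw [not_not.mp fun h => hp' (source_unique p' p c q h hpq), mul_zero]

theorem past_mul_future_restrict (hA : A.Bideterministic) {s : Set A.Q} (hs : A.usefulStates ⊆ s)
    (u v : List α) (q : (A.restrict s).Q) :
    A.past u q.1 * (A.restrict s).future v q = A.past u q.1 * A.future v q.1 := by
  induction v generalizing u q with
  | nil => rfl
  | cons c v ih =>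
    simp only [future, Finset.mul_sum, ← mul_assoc]
    rw [← sum_restrict_eq_sum (s := s)]
    · refine Finset.sum_congr rfl fun r _ => ?_
      change A.past u q.1 * A.σ q.1 c r.1 * _ = _
      by_cases hqr : A.σ q.1 c r.1 = 0
      · simp only [hqr, mul_zero, zero_mul]
      · rw [← hA.past_append_singleton_of_ne_zero u hqr, ih]
    · intro r hr
      by_cases hqr : A.σ q.1 c r = 0
      · simp only [hqr, mul_zero, zero_mul]
      · rw [← hA.past_append_singleton_of_ne_zero u hqr]
        exact past_mul_future_eq_zero (fun h => hr (hs h)) _ v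

theorem behaviour_restrict (hA : A.Bideterministic) {s : Set A.Q} (hs : A.usefulStates ⊆ s) :
    (A.restrict s).behaviour = A.behaviour := by
  funext w
  calc (A.restrict s).behaviour w
    _ = ∑ q : (A.restrict s).Q, A.past [] q.1 * A.future w q.1 :=
      Finset.sum_congr rfl fun q _ => hA.past_mul_future_restrict hs [] w q
    _ = ∑ q, A.past [] q * A.future w q :=
      sum_restrict_eq_sum fun _ hq => past_mul_future_eq_zero (fun h => hq (hs h)) [] w
    _ = A.behaviour w := rfl

theorem behaviour_append_of_past_ne_zero (hA : A.Bideterministic) {u : List α} {q : A.Q}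
    (hq : A.past u q ≠ 0) (v : List α) :
    A.behaviour (u ++ v) = A.past u q * A.future v q := by
  rw [behaviour_append]
  refine Fintype.sum_eq_single q fun r hr => ?_
  rw [not_not.mp fun h => hr (hA.eq_of_past_ne_zero h hq), zero_mul]

end Bideterministic

end Semiring

section Ring

variable {S : Type} [Ring S] [PreValuationRing S] {α : Type} {A : WeightedAutomaton S α}

theorem card_le_states_of_behaviour_append {ι : Type*} [Fintype ι] (u v : ι → List α)
    (diag : ∀ i, A.behaviour (u i ++ v i) ≠ 0)
    (offDiag : Pairwise fun i j => A.behaviour (u i ++ v j) = 0) :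
    Fintype.card ι ≤ A.states := by
  simp only [behaviour_append] at diag offDiag
  exact card_le_card_of_sum_mul_pairwise_eq_zero Finset.univ Finset.univ
    (fun i => A.past (u i)) (fun q i => A.future (v i) q) (fun i _ => diag i)
    fun _ _ _ _ hij => offDiag hij

theorem Bideterministic.states_restrict_usefulStates_le (hA : A.Bideterministic)
    (B : WeightedAutomaton S α) (hB : B.behaviour = A.behaviour) :
    (A.restrict A.usefulStates).states ≤ B.states := by
  choose u v huv using fun q : (A.restrict A.usefulStates).Q => q.2
  have behaviour_eq : ∀ p q, B.behaviour (u p ++ v q) = A.past (u p) p.1 * A.future (v q) p.1 :=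
    fun p q => by
      rw [hB, hA.behaviour_append_of_past_ne_zero (left_ne_zero_of_mul (huv p))]
  refine card_le_states_of_behaviour_append u v (fun q => behaviour_eq q q ▸ huv q)
    fun p q hpq => (behaviour_eq p q).trans ?_
  have future_eq_zero : A.future (v q) p.1 = 0 := not_not.mp fun h =>
    hpq (Subtype.ext (hA.eq_of_future_ne_zero h (right_ne_zero_of_mul (huv q))))
  rw [future_eq_zero, mul_zero]

end Ring

end WeightedAutomaton

theorem exists_minimal_bideterministic_equivalent_zmod_prime_pow_general
    {S : Type} [Ring S] [PreValuationRing S] {α : Type}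
    (A : WeightedAutomaton S α) (hA : A.Bideterministic) :
    ∃ B : WeightedAutomaton S α,
      B.behaviour = A.behaviour ∧ B.Bideterministic ∧ B.Minimal := by
  have behaviour_eq : (A.restrict A.usefulStates).behaviour = A.behaviour :=
    hA.behaviour_restrict subset_rfl
  exact ⟨A.restrict A.usefulStates, behaviour_eq, hA.restrict _,
    fun C hC => hA.states_restrict_usefulStates_le C (hC.trans behaviour_eq)⟩

/-- Every bideterministic weighted automaton over `ZMod p^k` (`p` prime,
`k ∈ ℕ`) admits an equivalent minimal automaton that is bideterministic. -/
theorem exists_minimal_bideterministic_equivalent_zmod_prime_pow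
    (p k : ℕ) (hp : p.Prime) {α : Type} [Fintype α] [Nonempty α]
    (A : WeightedAutomaton (ZMod (p ^ k)) α) (hA : A.Bideterministic) :
    ∃ B : WeightedAutomaton (ZMod (p ^ k)) α,
      B.behaviour = A.behaviour ∧ B.Bideterministic ∧ B.Minimal := by
  have : Fact p.Prime := ⟨hp⟩
  have : PreValuationRing (ZMod (p ^ k)) := preValuationRing_zmod_prime_pow p k
  exact exists_minimal_bideterministic_equivalent_zmod_prime_pow_general A hA
end

section
/- Let B be a bideterministic weighted automaton over a field F and alphabet Σ, and let u, v ∈ Σ*. If the supports of the left quotients u⁻¹‖B‖ and v⁻¹‖B‖ have a common element, then there exists a nonzero scalar c ∈ F such that u⁻¹‖B‖ = c · (v⁻¹‖B‖), i.e., the two quotients are nonzero scalar multiples of each other. -/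
/-!
In a bideterministic automaton a word `u` is read along at most one run, so `u⁻¹‖B‖` is a scalar
multiple of the future of the state reached by `u`. Codeterminism makes the futures of distinct
states have disjoint supports. A common element of the supports of `u⁻¹‖B‖` and `v⁻¹‖B‖` therefore
forces `u` and `v` to reach the same state, and both quotients are nonzero multiples of its future.
-/

open Function

theorem exists_sum_mul_eq_mul_of_support_subsingleton {ι R : Type*} [Fintype ι] [Nonempty ι]
    [NonUnitalNonAssocSemiring R] {x : ι → R} (hx : (support x).Subsingleton) :
    ∃ i, ∀ f : ι → R, ∑ j, x j * f j = x i * f i := by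
  obtain ⟨i, hi⟩ : ∃ i, ∀ j, j ≠ i → x j = 0 := by
    rcases hx.eq_empty_or_singleton with h | ⟨i, h⟩
    · simp [support_eq_empty_iff.mp h]
    · exact ⟨i, fun j hj => notMem_support.mp (h ▸ hj)⟩
  exact ⟨i, fun f => Fintype.sum_eq_single i fun j hj => by rw [hi j hj, zero_mul]⟩

namespace WeightedAutomaton

variable {S α : Type} [Semiring S] {A : WeightedAutomaton S α}

/-- Determinism of a weighted automaton: at most one state is initial, and every state has at most
one outgoing transition upon each letter, so that a word has at most one run from an
initial state. Initial states and transitions are those of nonzero weight. -/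
def Deterministic (A : WeightedAutomaton S α) : Prop :=
  (support A.ι).Subsingleton ∧ ∀ p c, (support (A.σ p c)).Subsingleton

/-- Codeterminism of a weighted automaton, that is, determinism of its reversal: at most one state
is terminal, and every state has at most one incoming transition upon each letter, so that a word
has nonzero future from at most one state. -/
def Codeterministic (A : WeightedAutomaton S α) : Prop :=
  (support A.τ).Subsingleton ∧ ∀ c q, (support fun p => A.σ p c q).Subsingleton

theorem Bideterministic.deterministic (hA : A.Bideterministic) : A.Deterministic :=
  ⟨fun p hp q hq => hA.1 p q hp hq, fun p c q hq q' hq' => hA.2.2.1 p c q q' hq hq'⟩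

theorem Bideterministic.codeterministic (hA : A.Bideterministic) : A.Codeterministic :=
  ⟨fun p hp q hq => hA.2.1 p q hp hq, fun c q p hp p' hp' => hA.2.2.2 p p' c q hp hp'⟩

theorem Codeterministic.support_future_subsingleton (hA : A.Codeterministic) (w : List α) :
    (support (A.future w)).Subsingleton := by
  induction w with
  | nil => exact hA.1
  | cons c w ih =>
    intro p hp q hq
    obtain ⟨p', -, hp'⟩ := Finset.exists_ne_zero_of_sum_ne_zero hp
    obtain ⟨q', -, hq'⟩ := Finset.exists_ne_zero_of_sum_ne_zero hq
    obtain rfl : p' = q' := ih (right_ne_zero_of_mul hp') (right_ne_zero_of_mul hq')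
    exact hA.2 c p' (left_ne_zero_of_mul hp') (left_ne_zero_of_mul hq')

/-- If `u` cannot be read from `p`, the witnesses are `a = 0` and an arbitrary `q`. -/
theorem Deterministic.exists_future_append_eq_mul (hA : A.Deterministic) (u : List α) (p : A.Q) :
    ∃ q a, ∀ w, A.future (u ++ w) p = a * A.future w q := by
  induction u generalizing p with
  | nil => exact ⟨p, 1, fun w => (one_mul _).symm⟩
  | cons c u ih =>
    have : Nonempty A.Q := ⟨p⟩
    obtain ⟨p', hp'⟩ := exists_sum_mul_eq_mul_of_support_subsingleton (hA.2 p c)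
    obtain ⟨q, a, hq⟩ := ih p'
    refine ⟨q, A.σ p c p' * a, fun w => ?_⟩
    rw [List.cons_append, future, hp', hq, mul_assoc]

theorem Deterministic.exists_behaviour_append_eq_mul [Nonempty A.Q] (hA : A.Deterministic)
    (u : List α) : ∃ q a, ∀ w, A.behaviour (u ++ w) = a * A.future w q := by
  obtain ⟨p, hp⟩ := exists_sum_mul_eq_mul_of_support_subsingleton hA.1
  obtain ⟨q, a, hq⟩ := hA.exists_future_append_eq_mul u p
  refine ⟨q, A.ι p * a, fun w => ?_⟩
  rw [behaviour, hp, hq, mul_assoc]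

theorem nonempty_Q_of_behaviour_ne_zero {w : List α} (hw : A.behaviour w ≠ 0) :
    Nonempty A.Q :=
  let ⟨q, _⟩ := Finset.exists_ne_zero_of_sum_ne_zero hw
  ⟨q⟩

end WeightedAutomaton

theorem leftQuotients_scalar_multiple_of_support_inter_general
    {K α : Type} [DivisionSemiring K] {B : WeightedAutomaton K α} (hB : B.Bideterministic)
    {u v : List α} (h : ∃ w, B.behaviour (u ++ w) ≠ 0 ∧ B.behaviour (v ++ w) ≠ 0) :
    ∃ c : K, c ≠ 0 ∧ ∀ w, B.behaviour (u ++ w) = c * B.behaviour (v ++ w) := by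
  obtain ⟨w₀, hu, hv⟩ := h
  have := WeightedAutomaton.nonempty_Q_of_behaviour_ne_zero hu
  obtain ⟨p, a, hp⟩ := hB.deterministic.exists_behaviour_append_eq_mul u
  obtain ⟨q, b, hq⟩ := hB.deterministic.exists_behaviour_append_eq_mul v
  rw [hp] at hu
  rw [hq] at hv
  obtain rfl : p = q := hB.codeterministic.support_future_subsingleton w₀
    (right_ne_zero_of_mul hu) (right_ne_zero_of_mul hv)
  have ha : a ≠ 0 := left_ne_zero_of_mul hu
  have hb : b ≠ 0 := left_ne_zero_of_mul hv
  refine ⟨a / b, div_ne_zero ha hb, fun w => ?_⟩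
  rw [hp, hq, ← mul_assoc, div_mul_cancel₀ a hb]

/-- If the supports of two left quotients `u⁻¹‖B‖` and `v⁻¹‖B‖` of the
behaviour of a bideterministic weighted automaton `B` over a field intersect,
then the two quotients are nonzero scalar multiples of each other. -/
theorem leftQuotients_scalar_multiple_of_support_inter
    {F : Type} [Field F] {α : Type} [Fintype α] [Nonempty α]
    (B : WeightedAutomaton F α) (hbidet : B.Bideterministic) (u v : List α)
    (h : ∃ w : List α, B.behaviour (u ++ w) ≠ 0 ∧ B.behaviour (v ++ w) ≠ 0) :
    ∃ c : F, c ≠ 0 ∧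
      ∀ w : List α, B.behaviour (u ++ w) = c * B.behaviour (v ++ w) :=
  leftQuotients_scalar_multiple_of_support_inter_general hbidet h
end
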